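/- As n → ∞, the ratio combination T_{n+2}/T_n − T_{n+1}²/T_n² is asymptotic to m²·n/log² n; more precisely, T_{n+2}/T_n − T_{n+1}²/T_n² = (m²·n/log² n)·(1 + o(1)). -/

import Mathlib

open Filter

def Tnk (m c : ℕ) : ℕ → ℕ → ℕ
  | 0, 0 => 1
  | 0, _ + 1 => 0
  | n + 1, 0 => c * Tnk m c n 0
  | n + 1, k + 1 => Tnk m c n k + (m * (k + 1) + c) * Tnk m c n (k + 1)

def Ttot (m c n : ℕ) : ℕ := ∑ k ∈ Finset.range (n + 1), Tnk m c n k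

/-!
By Dobiński's formula, `T_n e^{1/m} = m^n ∑ₖ (k + a)^n r^k / k!` with `a = c / m` and `r = 1 / m`.
Hence the ratio combination is `m²` times the variance of the law `p` on `ℕ` with weights
`w(k) = (k + a)^n r^k / k!`. Let `κ` be the mode, the real number where the weight ratio
`w(k + 1) / w(k)` equals `1`. The logarithm of this ratio has slope about `-1 / v` near `κ`, with
`v = κ² / n`, so the score `g(k) = 1 - p(k + 1) / p(k)` is close to `(k - κ) / v` there, and
it is monotone, which controls the far terms. Abel summation gives the Stein identity
`E[(K - κ) g(K)] ≈ 1`, so the second moment about `κ` is about `v`; likewise `E[g(K)] ≈ 0` makes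
the mean deviate from `κ` by `o(√v)`, and the variance is asymptotic to `v`. Finally
`n ~ κ log κ` gives `κ ~ n / log n` and `v ~ n / log² n`.
-/

open Asymptotics Set
open scoped Nat Topology

lemma Tnk_eq_zero_of_lt (m c : ℕ) : ∀ {n k : ℕ}, n < k → Tnk m c n k = 0
  | 0, _ + 1, _ => rfl
  | n + 1, k + 1, h => by
    simp [Tnk, Tnk_eq_zero_of_lt m c (show n < k by lia),
      Tnk_eq_zero_of_lt m c (show n < k + 1 by lia)]

lemma mul_descFactorial (x j : ℕ) :
    x * x.descFactorial j = x.descFactorial (j + 1) + j * x.descFactorial j := by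
  rcases le_or_gt j x with h | h
  · rw [Nat.descFactorial_succ, ← add_mul, Nat.sub_add_cancel h]
  · simp [Nat.descFactorial_of_lt h]

lemma add_pow_eq_sum_Tnk_mul_descFactorial (m c x n : ℕ) :
    (m * x + c) ^ n = ∑ j ∈ Finset.range (n + 1), Tnk m c n j * (m ^ j * x.descFactorial j) := by
  induction n with
  | zero => simp [Tnk]
  | succ n ih =>
    have mul_basis (j : ℕ) : (m * x + c) * (m ^ j * x.descFactorial j) =
        m ^ (j + 1) * x.descFactorial (j + 1) + (m * j + c) * (m ^ j * x.descFactorial j) := by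
      linear_combination m ^ (j + 1) * mul_descFactorial x j
    have shift : ∑ j ∈ Finset.range (n + 1), (m * j + c) * Tnk m c n j * (m ^ j * x.descFactorial j)
        = ∑ j ∈ Finset.range (n + 1), (m * (j + 1) + c) * Tnk m c n (j + 1) *
          (m ^ (j + 1) * x.descFactorial (j + 1)) + c * Tnk m c n 0 := by
      have := Finset.sum_range_succ'
        (fun j ↦ (m * j + c) * Tnk m c n j * (m ^ j * x.descFactorial j)) (n + 1)
      rw [Finset.sum_range_succ, Tnk_eq_zero_of_lt m c n.lt_succ_self] at this
      simpa using this
    calc (m * x + c) ^ (n + 1)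
      _ = ∑ j ∈ Finset.range (n + 1), Tnk m c n j * (m ^ (j + 1) * x.descFactorial (j + 1)) +
          ∑ j ∈ Finset.range (n + 1), (m * j + c) * Tnk m c n j * (m ^ j * x.descFactorial j) := by
        rw [pow_succ', ih, Finset.mul_sum, ← Finset.sum_add_distrib]
        exact Finset.sum_congr rfl fun j _ ↦ by linear_combination Tnk m c n j * mul_basis j
      _ = ∑ j ∈ Finset.range (n + 2), Tnk m c (n + 1) j * (m ^ j * x.descFactorial j) := by
        rw [shift, Finset.sum_range_succ' _ (n + 1), ← add_assoc, ← Finset.sum_add_distrib]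
        congr 1
        · exact Finset.sum_congr rfl fun j _ ↦ by simp only [Tnk]; ring
        · simp [Tnk]

lemma hasSum_descFactorial_mul_pow_div_factorial (r : ℝ) (j : ℕ) :
    HasSum (fun k : ℕ ↦ k.descFactorial j * (r ^ k / k !)) (r ^ j * Real.exp r) := by
  have h_small : ∑ k ∈ Finset.range j, (k.descFactorial j : ℝ) * (r ^ k / k !) = 0 :=
    Finset.sum_eq_zero fun k hk ↦ by simp [Nat.descFactorial_of_lt (Finset.mem_range.1 hk)]
  have h_shift (k : ℕ) : ((k + j).descFactorial j : ℝ) * (r ^ (k + j) / (k + j)!) =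
      r ^ j * (r ^ k / k !) := by
    have h_fact : ((k + j)! : ℝ) = k ! * (k + j).descFactorial j := by
      have := Nat.factorial_mul_descFactorial (Nat.le_add_left j k)
      rw [Nat.add_sub_cancel] at this
      exact_mod_cast this.symm
    have h_ne : ((k + j).descFactorial j : ℝ) ≠ 0 := by
      simp [Nat.descFactorial_eq_zero_iff_lt]
    rw [h_fact, pow_add]
    field_simp
  rw [← hasSum_nat_add_iff' j, h_small, sub_zero]
  simp_rw [h_shift, Real.exp_eq_exp_ℝ]
  exact (NormedSpace.expSeries_div_hasSum_exp r).mul_left _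

/-- The weight of `k` in the law of a Poisson variable `K` of parameter `r` tilted by `(K + a) ^ n`,
without the normalising factors. -/
noncomputable def poissonWeight (a r : ℝ) (n k : ℕ) : ℝ := (k + a) ^ n * (r ^ k / k !)

/-- The `n`-th moment of `K + a` for a Poisson variable `K` of parameter `r`, without the factor
`exp (-r)`. -/
noncomputable def poissonMoment (a r : ℝ) (n : ℕ) : ℝ := ∑' k, poissonWeight a r n k

/-- The variance of the probability law proportional to `poissonWeight a r n`. -/
noncomputable def tiltedVariance (a r : ℝ) (n : ℕ) : ℝ :=
  poissonMoment a r (n + 2) / poissonMoment a r n -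
    poissonMoment a r (n + 1) ^ 2 / poissonMoment a r n ^ 2

lemma Ttot_mul_exp {m : ℕ} (hm : m ≠ 0) (c n : ℕ) :
    Ttot m c n * Real.exp (1 / m) = m ^ n * poissonMoment (c / m) (1 / m) n := by
  have h_sum := hasSum_sum (s := Finset.range (n + 1)) fun j _ ↦
    (hasSum_descFactorial_mul_pow_div_factorial (1 / m) j).mul_left (Tnk m c n j * m ^ j : ℝ)
  have h_value : ∑ j ∈ Finset.range (n + 1), (Tnk m c n j * m ^ j : ℝ) *
      ((1 / m) ^ j * Real.exp (1 / m)) = Ttot m c n * Real.exp (1 / m) := by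
    rw [Ttot, Nat.cast_sum, Finset.sum_mul]
    exact Finset.sum_congr rfl fun j _ ↦ by rw [one_div, inv_pow]; field_simp
  have h_term (k : ℕ) : ∑ j ∈ Finset.range (n + 1), (Tnk m c n j * m ^ j : ℝ) *
      (k.descFactorial j * ((1 / m) ^ k / k !)) =
      m ^ n * poissonWeight (c / m) (1 / m) n k := by
    have h_expand : (m * k + c : ℝ) ^ n =
        ∑ j ∈ Finset.range (n + 1), (Tnk m c n j * (m ^ j * k.descFactorial j) : ℝ) := by
      exact_mod_cast add_pow_eq_sum_Tnk_mul_descFactorial m c k n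
    have h_scale : (m * k + c : ℝ) = m * (k + c / m) := by field_simp
    rw [poissonWeight, ← mul_assoc, ← mul_pow, ← h_scale, h_expand, Finset.sum_mul]
    exact Finset.sum_congr rfl fun j _ ↦ by ring
  simp_rw [h_value, h_term] at h_sum
  rw [← h_sum.tsum_eq, tsum_mul_left, poissonMoment]

lemma Ttot_variance_eq {m : ℕ} (hm : m ≠ 0) (c n : ℕ) :
    (Ttot m c (n + 2) : ℝ) / Ttot m c n - (Ttot m c (n + 1) : ℝ) ^ 2 / (Ttot m c n : ℝ) ^ 2 =
      m ^ 2 * tiltedVariance (c / m) (1 / m) n := by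
  have hT (n : ℕ) : (Ttot m c n : ℝ) =
      m ^ n * poissonMoment (c / m) (1 / m) n / Real.exp (1 / m) := by
    rw [← Ttot_mul_exp hm, mul_div_cancel_right₀ _ (Real.exp_ne_zero _)]
  simp only [hT, tiltedVariance, pow_add]
  field_simp

lemma poissonWeight_pos {a r : ℝ} (ha : 0 < a) (hr : 0 < r) (n k : ℕ) :
    0 < poissonWeight a r n k := by
  unfold poissonWeight
  positivity

lemma summable_poissonWeight {a r : ℝ} (ha : 0 < a) (hr : 0 < r) (n : ℕ) :
    Summable (poissonWeight a r n) := by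
  refine ((Real.summable_pow_div_factorial (Real.exp 1 * r)).mul_left
    (n ! * Real.exp a)).of_nonneg_of_le (fun k ↦ (poissonWeight_pos ha hr n k).le) fun k ↦ ?_
  have h_pow : (k + a) ^ n ≤ n ! * Real.exp (k + a) := by
    rw [← div_le_iff₀' (by positivity)]
    exact Real.pow_div_factorial_le_exp _ (by positivity) n
  calc poissonWeight a r n k
    _ ≤ n ! * Real.exp (k + a) * (r ^ k / k !) := by unfold poissonWeight; gcongr
    _ = n ! * Real.exp a * ((Real.exp 1 * r) ^ k / k !) := by
      rw [Real.exp_add, mul_pow, ← Real.exp_nat_mul, mul_one]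
      ring

lemma hasSum_poissonWeight {a r : ℝ} (ha : 0 < a) (hr : 0 < r) (n : ℕ) :
    HasSum (poissonWeight a r n) (poissonMoment a r n) :=
  (summable_poissonWeight ha hr n).hasSum

lemma poissonMoment_pos {a r : ℝ} (ha : 0 < a) (hr : 0 < r) (n : ℕ) :
    0 < poissonMoment a r n :=
  (summable_poissonWeight ha hr n).tsum_pos (fun k ↦ (poissonWeight_pos ha hr n k).le) 0
    (poissonWeight_pos ha hr n 0)

lemma hasSum_mul_sub_succ {R : Type*} [CommRing R] [TopologicalSpace R] [IsTopologicalRing R]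
    {f d w : ℕ → R} {s t : R} (hd : ∀ k, d (k + 1) = f (k + 1) - f k)
    (hfw : HasSum (fun k ↦ f k * w k) s) (hdw : HasSum (fun k ↦ d k * w k) t) :
    HasSum (fun k ↦ f k * (w k - w (k + 1))) (t + (f 0 - d 0) * w 0) := by
  have hfw' := (hasSum_nat_add_iff' 1).2 hfw
  have hdw' := (hasSum_nat_add_iff' 1).2 hdw
  simp only [Finset.sum_range_one, hd] at hfw' hdw'
  convert! (hfw.sub hfw').add hdw' using 1
  · ext k
    ring
  · ring

lemma abs_le_half_sq_div_add {s : ℝ} (hs : 0 < s) (x : ℝ) : |x| ≤ (x ^ 2 / s + s) / 2 := by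
  have h_eq : (x ^ 2 / s + s) / 2 - |x| = (|x| - s) ^ 2 / (2 * s) := by
    rw [← sq_abs x]
    field_simp
    ring
  have h_nonneg : 0 ≤ (|x| - s) ^ 2 / (2 * s) := by positivity
  linarith

lemma sq_mul_abs_le {x y : ℝ} (hxy : 0 ≤ x * y) : x ^ 2 * |y| ≤ x * y + x ^ 3 * y := by
  have h_abs : |x| * |y| = x * y := by rw [← abs_mul, abs_of_nonneg hxy]
  have h_le : |x| ≤ 1 + |x| ^ 2 := by nlinarith [sq_nonneg (|x| - 1)]
  calc x ^ 2 * |y| = |x| * (|x| * |y|) := by rw [← sq_abs]; ring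
    _ ≤ (1 + |x| ^ 2) * (x * y) := by rw [h_abs]; gcongr
    _ = x * y + x ^ 3 * y := by rw [sq_abs]; ring

lemma div_sq_mul_add_le_div_sqrt {A v η M : ℝ} (hA : 0 ≤ A) (hv : 1 ≤ v) (hM : 0 ≤ M)
    (hMv : 7 * M ≤ η * √v) : M / v ^ 2 * (6 * A + 3) ≤ η * (A / v + 1) / √v := by
  calc M / v ^ 2 * (6 * A + 3)
    _ ≤ M / v ^ 2 * (7 * (A + v)) := by gcongr; linarith
    _ = 7 * M / v * (A / v + 1) := by field_simp
    _ ≤ η * √v / v * (A / v + 1) := by gcongr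
    _ = η * √v / (√v * √v) * (A / v + 1) := by rw [Real.mul_self_sqrt (by linarith)]
    _ = _ := by field_simp

/-- `g` is close to the linear function `y ↦ (y - κ) / v` on `[0, ∞)`: the relative error is at most
`η` near `κ`, and the term with factor `M` covers the points far from `κ`. -/
structure IsNearlyLinear (g : ℝ → ℝ) (κ v η M : ℝ) : Prop where
  sign : ∀ y, 0 ≤ y → 0 ≤ (y - κ) * g y
  abs_sub_le : ∀ y, 0 ≤ y →
    |(y - κ) / v - g y| ≤ η * (|y - κ| / v) + M / v ^ 2 * ((y - κ) ^ 2 * |g y|)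

/-- `p` is a probability law on `ℕ` with score `g`, the discrete analogue of `-(log p)'`; its first
two moments about `κ` are `μ` and `A`, and its third moment exists. -/
structure HasScore (p : ℕ → ℝ) (g : ℝ → ℝ) (κ μ A : ℝ) : Prop where
  nonneg : ∀ k, 0 ≤ p k
  sub_succ : ∀ k, p k - p (k + 1) = p k * g k
  hasSum_one : HasSum p 1
  hasSum_mean : HasSum (fun k : ℕ ↦ (k - κ) * p k) μ
  hasSum_sq : HasSum (fun k : ℕ ↦ (k - κ) ^ 2 * p k) A
  summable_cube : Summable (fun k : ℕ ↦ (k - κ) ^ 3 * p k)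

namespace HasScore

variable {p : ℕ → ℝ} {g : ℝ → ℝ} {κ μ A v η M : ℝ}

lemma hasSum_score (h : HasScore p g κ μ A) : HasSum (fun k : ℕ ↦ p k * g k) (p 0) := by
  have := hasSum_mul_sub_succ (f := 1) (d := 0) (w := p) (t := 0) (by simp)
    (by simpa using h.hasSum_one) (by simp)
  simpa [h.sub_succ] using this

lemma hasSum_mul_score (h : HasScore p g κ μ A) :
    HasSum (fun k : ℕ ↦ (k - κ) * (p k * g k)) (1 - (1 + κ) * p 0) := by
  have := hasSum_mul_sub_succ (d := 1) (by simp) h.hasSum_mean (by simpa using h.hasSum_one)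
  simp only [h.sub_succ] at this
  convert! this using 1
  simp only [Nat.cast_zero, Pi.one_apply]
  ring

lemma hasSum_cube_mul_score (h : HasScore p g κ μ A) :
    HasSum (fun k : ℕ ↦ (k - κ) ^ 3 * (p k * g k))
      (3 * A - 3 * μ + 1 - (1 + κ) ^ 3 * p 0) := by
  have h_diff : HasSum (fun k : ℕ ↦ (3 * (k - κ) ^ 2 - 3 * (k - κ) + 1) * p k)
      (3 * A - 3 * μ + 1) := by
    convert! ((h.hasSum_sq.mul_left 3).sub (h.hasSum_mean.mul_left 3)).add h.hasSum_one using 2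
    ring
  have := hasSum_mul_sub_succ (fun k ↦ by push_cast; ring) h.summable_cube.hasSum h_diff
  simp only [h.sub_succ] at this
  convert! this using 1
  rw [Nat.cast_zero]
  ring

lemma second_moment_nonneg (h : HasScore p g κ μ A) : 0 ≤ A :=
  h.hasSum_sq.nonneg fun k ↦ mul_nonneg (sq_nonneg _) (h.nonneg k)

lemma sq_mul_apply_zero_le (h : HasScore p g κ μ A) : κ ^ 2 * p 0 ≤ A := by
  simpa using le_hasSum h.hasSum_sq 0 fun k _ ↦ mul_nonneg (sq_nonneg _) (h.nonneg k)

lemma cube_mul_score_le (h : HasScore p g κ μ A) (hκ : 0 ≤ κ) :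
    3 * A - 3 * μ + 1 - (1 + κ) ^ 3 * p 0 ≤ 6 * A + 2 := by
  have h_nonneg : 0 ≤ 3 * A + 3 * μ + 1 := by
    refine (((h.hasSum_sq.mul_left 3).add (h.hasSum_mean.mul_left 3)).add h.hasSum_one).nonneg
      fun k ↦ ?_
    calc 0 ≤ (3 * (k - κ + 1 / 2) ^ 2 + 1 / 4) * p k := mul_nonneg (by positivity) (h.nonneg k)
      _ = _ := by ring
  have := mul_nonneg (by positivity : 0 ≤ (1 + κ) ^ 3) (h.nonneg 0)
  linarith

lemma abs_second_moment_div_sub_le (h : HasScore p g κ μ A) (hg : IsNearlyLinear g κ v η M)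
    (hκ : 0 ≤ κ) (hM : 0 ≤ M) :
    |A / v - (1 - (1 + κ) * p 0)| ≤ η * (A / v) + M / v ^ 2 * (6 * A + 2) := by
  have h_term (k : ℕ) : |(k - κ) ^ 2 * p k / v - (k - κ) * (p k * g k)| ≤
      η * ((k - κ) ^ 2 * p k / v) + M / v ^ 2 * ((k - κ) ^ 3 * (p k * g k)) := by
    have h_sign : |(k : ℝ) - κ| * |g k| = (k - κ) * g k := by
      rw [← abs_mul, abs_of_nonneg (hg.sign k k.cast_nonneg)]
    calc |(k - κ) ^ 2 * p k / v - (k - κ) * (p k * g k)|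
      _ = p k * |(k : ℝ) - κ| * |(k - κ) / v - g k| := by
        rw [← abs_of_nonneg (h.nonneg k), ← abs_mul, ← abs_mul, abs_of_nonneg (h.nonneg k)]
        congr 1
        ring
      _ ≤ p k * |(k : ℝ) - κ| *
          (η * (|(k : ℝ) - κ| / v) + M / v ^ 2 * ((k - κ) ^ 2 * |g k|)) := by
        gcongr
        · exact mul_nonneg (h.nonneg k) (abs_nonneg _)
        · exact hg.abs_sub_le k k.cast_nonneg
      _ = η * (|(k : ℝ) - κ| ^ 2 * p k / v) +
          M / v ^ 2 * ((k - κ) ^ 2 * p k * (|(k : ℝ) - κ| * |g k|)) := by ring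
      _ = _ := by rw [h_sign, sq_abs]; ring
  have h_left := (h.hasSum_sq.div_const v).sub h.hasSum_mul_score
  have h_right := ((h.hasSum_sq.div_const v).mul_left η).add
    (h.hasSum_cube_mul_score.mul_left (M / v ^ 2))
  calc |A / v - (1 - (1 + κ) * p 0)|
    _ ≤ η * (A / v) + M / v ^ 2 * (3 * A - 3 * μ + 1 - (1 + κ) ^ 3 * p 0) :=
      abs_le.2 ⟨hasSum_le (fun k ↦ (abs_le.1 (h_term k)).1) h_right.neg h_left,
        hasSum_le (fun k ↦ (abs_le.1 (h_term k)).2) h_left h_right⟩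
    _ ≤ _ := by gcongr; exact h.cube_mul_score_le hκ

lemma abs_mean_div_sub_le (h : HasScore p g κ μ A) (hg : IsNearlyLinear g κ v η M) {s : ℝ}
    (hκ : 0 ≤ κ) (hs : 0 < s) (hv : 0 ≤ v) (hη : 0 ≤ η) (hM : 0 ≤ M) :
    |μ / v - p 0| ≤ η * ((A / s + s) / 2 / v) + M / v ^ 2 * (6 * A + 3) := by
  have h_term (k : ℕ) : |(k - κ) * p k / v - p k * g k| ≤
      η * (((k - κ) ^ 2 * p k / s + s * p k) / 2 / v) +
        M / v ^ 2 * ((k - κ) * (p k * g k) + (k - κ) ^ 3 * (p k * g k)) :=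
    calc |(k - κ) * p k / v - p k * g k|
      _ = p k * |(k - κ) / v - g k| := by
        rw [← abs_of_nonneg (h.nonneg k), ← abs_mul, abs_of_nonneg (h.nonneg k)]
        congr 1
        ring
      _ ≤ p k * (η * (|(k : ℝ) - κ| / v) + M / v ^ 2 * ((k - κ) ^ 2 * |g k|)) :=
        mul_le_mul_of_nonneg_left (hg.abs_sub_le k k.cast_nonneg) (h.nonneg k)
      _ ≤ p k * (η * ((((k - κ) ^ 2 / s + s) / 2) / v) +
          M / v ^ 2 * ((k - κ) * g k + (k - κ) ^ 3 * g k)) := by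
        gcongr
        · exact h.nonneg k
        · exact abs_le_half_sq_div_add hs _
        · exact sq_mul_abs_le (hg.sign k k.cast_nonneg)
      _ = _ := by ring
  have h_left := (h.hasSum_mean.div_const v).sub h.hasSum_score
  have h_abs := ((h.hasSum_sq.div_const s).add (h.hasSum_one.mul_left s)).div_const 2
  have h_right := ((h_abs.div_const v).mul_left η).add
    ((h.hasSum_mul_score.add h.hasSum_cube_mul_score).mul_left (M / v ^ 2))
  rw [mul_one] at h_right
  calc |μ / v - p 0|
    _ ≤ η * ((A / s + s) / 2 / v) + M / v ^ 2 *
        (1 - (1 + κ) * p 0 + (3 * A - 3 * μ + 1 - (1 + κ) ^ 3 * p 0)) :=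
      abs_le.2 ⟨hasSum_le (fun k ↦ (abs_le.1 (h_term k)).1) h_right.neg h_left,
        hasSum_le (fun k ↦ (abs_le.1 (h_term k)).2) h_left h_right⟩
    _ ≤ _ := by
      gcongr _ + M / v ^ 2 * ?_
      linarith [h.cube_mul_score_le hκ, mul_nonneg (by positivity : 0 ≤ 1 + κ) (h.nonneg 0)]

lemma mul_apply_zero_le (h : HasScore p g κ μ A) (hκ : 0 < κ) (hv : 0 < v) (hvκ : v ≤ η * κ) :
    κ * p 0 ≤ η * (A / v) := by
  have hA := h.second_moment_nonneg
  refine le_of_mul_le_mul_left ?_ hκ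
  calc κ * (κ * p 0) = κ ^ 2 * p 0 := by ring
    _ ≤ v * (A / v) := by rw [mul_div_cancel₀ _ hv.ne']; exact h.sq_mul_apply_zero_le
    _ ≤ η * κ * (A / v) := by gcongr
    _ = κ * (η * (A / v)) := by ring

lemma abs_second_moment_div_sub_one_le (h : HasScore p g κ μ A) (hg : IsNearlyLinear g κ v η M)
    (hκ : 1 ≤ κ) (hη : 0 ≤ η) (hM : 0 ≤ M) (hv : 1 ≤ v) (hvκ : v ≤ η * κ) (hMv : 7 * M ≤ η * √v) :
    |A / v - 1| ≤ 4 * η * (A / v + 1) := by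
  have hA := h.second_moment_nonneg
  have h_stein := h.abs_second_moment_div_sub_le hg (by linarith) hM
  have h_far := div_sq_mul_add_le_div_sqrt hA hv hM hMv
  have : η * (A / v + 1) / √v ≤ η * (A / v + 1) :=
    div_le_self (by positivity) (Real.one_le_sqrt.2 hv)
  have : M / v ^ 2 * 2 ≤ M / v ^ 2 * 3 := by gcongr; norm_num
  have := h.mul_apply_zero_le (by linarith) (by linarith) hvκ
  have : p 0 ≤ κ * p 0 := le_mul_of_one_le_left (h.nonneg 0) hκ
  have := h.nonneg 0
  rw [abs_le] at h_stein ⊢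
  constructor <;> linarith

lemma abs_mean_div_sqrt_le (h : HasScore p g κ μ A) (hg : IsNearlyLinear g κ v η M)
    (hκ : 0 < κ) (hη : 0 ≤ η) (hη' : η ≤ 1) (hM : 0 ≤ M) (hv : 1 ≤ v) (hvκ : v ≤ η * κ)
    (hMv : 7 * M ≤ η * √v) : |μ / √v| ≤ 4 * η * (A / v + 1) := by
  have hA := h.second_moment_nonneg
  have hs : 1 ≤ √v := Real.one_le_sqrt.2 hv
  have h_dev : (A / √v + √v) / 2 / v = (A / v + 1) / 2 / √v := by
    rw [div_add' _ _ _ (by positivity), Real.mul_self_sqrt (by linarith)]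
    field_simp
  have h_mean : |μ / v - p 0| ≤ 2 * (η * (A / v + 1)) / √v :=
    calc |μ / v - p 0|
      _ ≤ η * ((A / √v + √v) / 2 / v) + M / v ^ 2 * (6 * A + 3) :=
        h.abs_mean_div_sub_le hg hκ.le (by linarith) (by linarith) hη hM
      _ ≤ η * ((A / √v + √v) / 2 / v) + η * (A / v + 1) / √v := by
        gcongr
        exact div_sq_mul_add_le_div_sqrt hA hv hM hMv
      _ = 3 / 2 * (η * (A / v + 1)) / √v := by
        rw [h_dev]
        ring
      _ ≤ 2 * (η * (A / v + 1)) / √v := by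
        gcongr
        norm_num
  have h_zero : √v * p 0 ≤ η * (A / v) :=
    calc √v * p 0
      _ ≤ κ * p 0 := by
        gcongr
        · exact h.nonneg 0
        · nlinarith [Real.sq_sqrt (by linarith : 0 ≤ v)]
      _ ≤ η * (A / v) := h.mul_apply_zero_le hκ (by linarith) hvκ
  calc |μ / √v|
    _ = √v * |μ / v| := by
      rw [← mul_one_div, ← Real.sqrt_div_self', mul_div_left_comm, abs_mul,
        abs_of_nonneg (Real.sqrt_nonneg v)]
    _ ≤ √v * (2 * (η * (A / v + 1)) / √v + p 0) := by
      gcongr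
      have := (abs_sub_abs_le_abs_sub (μ / v) (p 0)).trans h_mean
      rw [abs_of_nonneg (h.nonneg 0)] at this
      linarith
    _ = 2 * (η * (A / v + 1)) + √v * p 0 := by field_simp
    _ ≤ _ := by linarith [(by positivity : 0 ≤ η * (A / v))]

lemma abs_variance_div_sub_one_le (h : HasScore p g κ μ A) (hg : IsNearlyLinear g κ v η M)
    (hη : 0 < η) (hη' : η ≤ 1 / 8) (hM : 0 ≤ M) (hv : 1 ≤ v) (hvκ : v ≤ η * κ)
    (hMv : 7 * M ≤ η * √v) : |(A - μ ^ 2) / v - 1| ≤ 48 * η := by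
  have hκ : 1 ≤ κ := by nlinarith
  have h_second := h.abs_second_moment_div_sub_one_le hg hκ hη.le hM hv hvκ hMv
  have h_mean := h.abs_mean_div_sqrt_le hg (by linarith) hη.le (by linarith) hM hv hvκ hMv
  have h_bdd : A / v ≤ 3 := by nlinarith [(abs_le.1 h_second).2]
  have h_second' : |A / v - 1| ≤ 16 * η := by nlinarith
  have h_mean' : |μ / √v| ≤ 16 * η := by nlinarith
  have h_mean_sq : μ ^ 2 / v ≤ 32 * η := by
    calc μ ^ 2 / v = |μ / √v| ^ 2 := by rw [sq_abs, div_pow, Real.sq_sqrt (by linarith)]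
      _ ≤ 32 * η := by nlinarith [abs_nonneg (μ / √v)]
  calc |(A - μ ^ 2) / v - 1| = |(A / v - 1) - μ ^ 2 / v| := by ring_nf
    _ ≤ |A / v - 1| + |μ ^ 2 / v| := abs_sub _ _
    _ ≤ 48 * η := by rw [abs_of_nonneg (a := μ ^ 2 / v) (by positivity)]; linarith

end HasScore

lemma half_le_abs_of_monotoneOn {g : ℝ → ℝ} {κ v η δ y : ℝ} (hg : MonotoneOn g (Ici 0))
    (hv : 0 < v) (hη : η ≤ 1 / 2) (hδ : 0 < δ) (hδκ : δ * v ≤ κ)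
    (h_window : ∀ x, |x - κ| ≤ δ * v → |(x - κ) / v - g x| ≤ η * (|x - κ| / v))
    (hy : 0 ≤ y) (h_far : δ * v < |y - κ|) : δ / 2 ≤ |g y| := by
  have hδv : 0 < δ * v := by positivity
  rcases lt_abs.1 h_far with h_right | h_left
  · have h_edge := h_window (κ + δ * v) (by simp [abs_of_pos hδv])
    simp only [add_sub_cancel_left, abs_of_pos hδv, mul_div_cancel_right₀ _ hv.ne'] at h_edge
    have := hg (mem_Ici.2 (by linarith)) (mem_Ici.2 hy) (by linarith : κ + δ * v ≤ y)
    have : δ / 2 ≤ g y := by nlinarith [(abs_le.1 h_edge).2]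
    exact this.trans (le_abs_self _)
  · have h_edge := h_window (κ - δ * v) (by simp [abs_of_pos hδv])
    simp only [sub_sub_cancel_left, abs_neg, abs_of_pos hδv, neg_div,
      mul_div_cancel_right₀ _ hv.ne'] at h_edge
    have := hg (mem_Ici.2 hy) (mem_Ici.2 (by linarith)) (by linarith : y ≤ κ - δ * v)
    have : δ / 2 ≤ -g y := by nlinarith [(abs_le.1 h_edge).1]
    exact this.trans (neg_le_abs _)

lemma isNearlyLinear_of_monotoneOn {g : ℝ → ℝ} {κ v η δ : ℝ} (hg : MonotoneOn g (Ici 0))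
    (hv : 0 < v) (hη : 0 ≤ η) (hη' : η ≤ 1 / 2) (hδ : 0 < δ) (hδκ : δ * v ≤ κ)
    (h_window : ∀ y, |y - κ| ≤ δ * v → |(y - κ) / v - g y| ≤ η * (|y - κ| / v)) :
    IsNearlyLinear g κ v η (3 / δ ^ 2) := by
  have hδv : 0 < δ * v := by positivity
  have hgκ : g κ = 0 := by simpa using h_window κ (by simpa using hδv.le)
  have hκ : 0 ≤ κ := hδv.le.trans hδκ
  refine ⟨fun y hy ↦ ?_, fun y hy ↦ ?_⟩
  · rcases le_total y κ with h | h
    · have := hg hy hκ h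
      exact mul_nonneg_of_nonpos_of_nonpos (by linarith) (by linarith)
    · have := hg hκ hy h
      exact mul_nonneg (by linarith) (by linarith)
  · rcases le_or_gt |y - κ| (δ * v) with h | h
    · exact (h_window y h).trans (le_add_of_nonneg_right (by positivity))
    · have h_large := half_le_abs_of_monotoneOn hg hv hη' hδ hδκ h_window hy h
      have h_linear : |y - κ| / v ≤ 2 / δ ^ 2 / v ^ 2 * ((y - κ) ^ 2 * |g y|) :=
        calc |y - κ| / v = 2 / δ ^ 2 / v ^ 2 * (|y - κ| * (δ * v) * (δ / 2)) := by field_simp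
          _ ≤ 2 / δ ^ 2 / v ^ 2 * (|y - κ| * |y - κ| * |g y|) := by gcongr
          _ = _ := by rw [abs_mul_abs_self, sq (y - κ)]
      have h_score : |g y| ≤ 1 / δ ^ 2 / v ^ 2 * ((y - κ) ^ 2 * |g y|) :=
        calc |g y| = 1 / δ ^ 2 / v ^ 2 * ((δ * v) ^ 2 * |g y|) := by field_simp
          _ ≤ 1 / δ ^ 2 / v ^ 2 * (|y - κ| ^ 2 * |g y|) := by gcongr
          _ = _ := by rw [sq_abs]
      calc |(y - κ) / v - g y| ≤ |y - κ| / v + |g y| := by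
            simpa [abs_div, abs_of_pos hv] using abs_sub ((y - κ) / v) (g y)
        _ ≤ 3 / δ ^ 2 / v ^ 2 * ((y - κ) ^ 2 * |g y|) := by
            linear_combination h_linear + h_score
        _ ≤ _ := le_add_of_nonneg_left (by positivity)

/-- The logarithm of `poissonWeight a r n (k + 1) / poissonWeight a r n k`, extended from natural
numbers `k` to real `y ≥ 0`. -/
noncomputable def logRatio (a r : ℝ) (n : ℕ) (y : ℝ) : ℝ :=
  n * Real.log (1 + 1 / (y + a)) - Real.log (y + 1) + Real.log r

section LogRatio

variable {a r : ℝ} {n : ℕ}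

lemma poissonWeight_succ (ha : 0 < a) (hr : 0 < r) (n k : ℕ) :
    poissonWeight a r n (k + 1) = poissonWeight a r n k * Real.exp (logRatio a r n k) := by
  have h_exp : Real.exp (logRatio a r n k) = (1 + 1 / (k + a)) ^ n / (k + 1) * r := by
    rw [logRatio, Real.exp_add, Real.exp_sub, Real.exp_log hr, Real.exp_log (by positivity),
      Real.exp_nat_mul, Real.exp_log (by positivity)]
  have h_base : (k + 1 + a : ℝ) = (k + a) * (1 + 1 / (k + a)) := by
    field_simp
    ring
  rw [h_exp, poissonWeight, poissonWeight, Nat.cast_succ, h_base, mul_pow, Nat.factorial_succ]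
  push_cast
  field_simp
  ring

lemma antitoneOn_logRatio (ha : 0 < a) : AntitoneOn (logRatio a r n) (Ici 0) := by
  intro x hx y hy hxy
  rw [mem_Ici] at hx hy
  unfold logRatio
  gcongr

lemma hasDerivAt_logRatio (ha : 0 < a) {y : ℝ} (hy : 0 ≤ y) :
    HasDerivAt (logRatio a r n) (-(n / ((y + a) * (y + 1 + a))) - 1 / (y + 1)) y := by
  have h_inv : HasDerivAt (fun y ↦ 1 + 1 / (y + a)) (-1 / (y + a) ^ 2) y := by
    simpa only [one_div] using
      (((hasDerivAt_id' y).add_const a).fun_inv (by positivity)).const_add 1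
  have h_succ := ((hasDerivAt_id y).add_const 1).log (by positivity)
  convert! (((h_inv.log (by positivity)).const_mul (n : ℝ)).sub h_succ).add_const (Real.log r)
    using 1
  rw [id]
  field_simp
  ring

lemma abs_sub_one_sub_exp_le {G t δ : ℝ} (hδ : δ ≤ 1 / 2) (ht : |t| ≤ δ)
    (hG : |G + t| ≤ δ * |t|) : |t - (1 - Real.exp G)| ≤ 5 * δ * |t| := by
  have hG' : |G| ≤ 3 / 2 * |t| :=
    calc |G| = |(G + t) - t| := by ring_nf
      _ ≤ |G + t| + |t| := abs_sub _ _
      _ ≤ 3 / 2 * |t| := by nlinarith [abs_nonneg t]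
  have h_exp : |Real.exp G - 1 - G| ≤ G ^ 2 :=
    Real.abs_exp_sub_one_sub_id_le (by linarith)
  calc |t - (1 - Real.exp G)| = |(G + t) + (Real.exp G - 1 - G)| := by ring_nf
    _ ≤ |G + t| + |Real.exp G - 1 - G| := abs_add_le _ _
    _ ≤ δ * |t| + |G| ^ 2 := by rw [sq_abs]; gcongr
    _ ≤ δ * |t| + 9 / 4 * (|t| * |t|) := by nlinarith [abs_nonneg G]
    _ ≤ 5 * δ * |t| := by nlinarith [abs_nonneg t]

lemma abs_one_sub_sq_div_mul_le {κ p q ε : ℝ} (hκ : 0 < κ) (hε : ε ≤ 1 / 10)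
    (hp : |p - κ| ≤ ε * κ) (hq : |q - κ| ≤ ε * κ) : |1 - κ ^ 2 / (p * q)| ≤ 3 * ε := by
  obtain ⟨x, rfl⟩ : ∃ x, p = κ * (1 + x) := ⟨p / κ - 1, by field_simp; ring⟩
  obtain ⟨y, rfl⟩ : ∃ y, q = κ * (1 + y) := ⟨q / κ - 1, by field_simp; ring⟩
  have h_sub (x : ℝ) : |κ * (1 + x) - κ| = |x| * κ := by
    rw [mul_one_add, add_sub_cancel_left, abs_mul, abs_of_pos hκ, mul_comm]
  rw [h_sub, mul_le_mul_iff_left₀ hκ, abs_le] at hp hq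
  have h_prod : 1 - 2 * ε ≤ (1 + x) * (1 + y) := by nlinarith
  have h_pos : 0 < (1 + x) * (1 + y) := by linarith
  have h_eq : 1 - κ ^ 2 / (κ * (1 + x) * (κ * (1 + y))) =
      ((1 + x) * (1 + y) - 1) / ((1 + x) * (1 + y)) := by
    have : 1 + x ≠ 0 := left_ne_zero_of_mul h_pos.ne'
    have : 1 + y ≠ 0 := right_ne_zero_of_mul h_pos.ne'
    field_simp
  rw [h_eq, abs_div, abs_of_pos h_pos, div_le_iff₀ h_pos, abs_le]
  constructor <;> nlinarith

lemma abs_deriv_logRatio_add_le (ha : 0 < a) (hn : n ≠ 0) {κ δ : ℝ} (hκ : 0 < κ) (hδ : δ ≤ 1 / 10)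
    (haκ : a + 1 ≤ δ / 8 * κ) (hκn : κ / n ≤ δ / 8) {x : ℝ} (hx : |x - κ| ≤ δ / 8 * κ) :
    |-(n / ((x + a) * (x + 1 + a))) - 1 / (x + 1) + 1 / (κ ^ 2 / n)| ≤ δ / (κ ^ 2 / n) := by
  rw [abs_le] at hx
  have hx0 : κ / 2 ≤ x := by nlinarith
  have hx_pos : 0 < x := by linarith
  have h_main : |1 - κ ^ 2 / ((x + a) * (x + 1 + a))| ≤ 3 * (δ / 4) := by
    refine abs_one_sub_sq_div_mul_le hκ (by linarith) ?_ ?_ <;>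
      exact abs_le.2 ⟨by linarith, by linarith⟩
  have h_log : |κ / n * (κ / (x + 1))| ≤ δ / 8 * 2 := by
    have : κ / (x + 1) ≤ 2 := by
      rw [div_le_iff₀ (by linarith)]
      linarith
    rw [abs_of_nonneg (by positivity)]
    gcongr
    exact (by positivity : 0 ≤ κ / n).trans hκn
  have hv : 0 < κ ^ 2 / n := by positivity
  calc |-(n / ((x + a) * (x + 1 + a))) - 1 / (x + 1) + 1 / (κ ^ 2 / n)|
    _ = |1 - κ ^ 2 / ((x + a) * (x + 1 + a)) - κ / n * (κ / (x + 1))| / (κ ^ 2 / n) := by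
      rw [← abs_of_pos hv, ← abs_div, abs_of_pos hv]
      congr 1
      field_simp
      ring
    _ ≤ δ / (κ ^ 2 / n) := by
      gcongr
      exact (abs_sub _ _).trans (by linarith)

lemma mul_sq_div_le {κ δ : ℝ} (hκ : 0 ≤ κ) (hδ : δ ≤ 1) (hκn : κ / n ≤ δ / 8) :
    δ * (κ ^ 2 / n) ≤ δ / 8 * κ :=
  calc δ * (κ ^ 2 / n) ≤ 1 * (κ ^ 2 / n) := by gcongr
    _ = κ / n * κ := by ring
    _ ≤ δ / 8 * κ := by gcongr

lemma abs_logRatio_add_le (ha : 0 < a) (hn : n ≠ 0) {κ δ : ℝ} (hκ : 0 < κ) (hδ : 0 < δ)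
    (hδ' : δ ≤ 1 / 10) (haκ : a + 1 ≤ δ / 8 * κ) (hκn : κ / n ≤ δ / 8)
    (h_mode : logRatio a r n κ = 0) {y : ℝ} (hy : |y - κ| ≤ δ * (κ ^ 2 / n)) :
    |logRatio a r n y + (y - κ) / (κ ^ 2 / n)| ≤ δ * (|y - κ| / (κ ^ 2 / n)) := by
  have h_window {x : ℝ} (hx : x ∈ Metric.closedBall κ (δ * (κ ^ 2 / n))) : |x - κ| ≤ δ / 8 * κ := by
    rw [Metric.mem_closedBall, Real.dist_eq] at hx
    exact hx.trans (mul_sq_div_le hκ.le (by linarith) hκn)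
  have h_deriv (x : ℝ) (hx : x ∈ Metric.closedBall κ (δ * (κ ^ 2 / n))) :
      HasDerivWithinAt (fun x ↦ logRatio a r n x + x / (κ ^ 2 / n))
        (-(n / ((x + a) * (x + 1 + a))) - 1 / (x + 1) + 1 / (κ ^ 2 / n))
        (Metric.closedBall κ (δ * (κ ^ 2 / n))) x := by
    have hx0 : 0 ≤ x := by nlinarith [(abs_le.1 (h_window hx)).1]
    exact ((hasDerivAt_logRatio ha hx0).add ((hasDerivAt_id x).div_const _)).hasDerivWithinAt
  have := (convex_closedBall κ _).norm_image_sub_le_of_norm_hasDerivWithin_le h_deriv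
    (fun x hx ↦ abs_deriv_logRatio_add_le ha hn hκ hδ' haκ hκn (h_window hx))
    (Metric.mem_closedBall_self (by positivity)) hy
  simp only [h_mode, zero_add, Real.norm_eq_abs] at this
  rwa [add_sub_assoc, ← sub_div, div_mul_eq_mul_div, mul_div_assoc] at this

lemma isNearlyLinear_one_sub_exp_logRatio (ha : 0 < a) (hn : n ≠ 0) {κ δ : ℝ} (hκ : 0 < κ)
    (hδ : 0 < δ) (hδ' : δ ≤ 1 / 10) (haκ : a + 1 ≤ δ / 8 * κ) (hκn : κ / n ≤ δ / 8)
    (h_mode : logRatio a r n κ = 0) :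
    IsNearlyLinear (fun y ↦ 1 - Real.exp (logRatio a r n y)) κ (κ ^ 2 / n) (5 * δ)
      (3 / δ ^ 2) := by
  have hv : 0 < κ ^ 2 / n := by positivity
  have hvκ := mul_sq_div_le hκ.le (by linarith) hκn
  refine isNearlyLinear_of_monotoneOn (fun x hx y hy hxy ↦ ?_) hv (by positivity) (by linarith) hδ
    (by nlinarith) fun y hy ↦ ?_
  · have := antitoneOn_logRatio (r := r) (n := n) ha hx hy hxy
    gcongr
  · have h_window := abs_logRatio_add_le ha hn hκ hδ hδ' haκ hκn h_mode hy
    have h_abs : |(y - κ) / (κ ^ 2 / n)| = |y - κ| / (κ ^ 2 / n) := by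
      rw [abs_div, abs_of_pos hv]
    rw [← h_abs] at h_window ⊢
    refine abs_sub_one_sub_exp_le (by linarith) ?_ h_window
    rwa [h_abs, div_le_iff₀ hv]

end LogRatio

section Mode

variable {a r : ℝ}

lemma tendsto_logRatio_atTop (ha : 0 < a) (r : ℝ) {y : ℝ} (hy : 0 ≤ y) :
    Tendsto (fun n ↦ logRatio a r n y) atTop atTop := by
  have h_log : 0 < Real.log (1 + 1 / (y + a)) :=
    Real.log_pos (lt_add_of_pos_right 1 (by positivity))
  simp only [logRatio, sub_eq_add_neg]
  exact tendsto_atTop_add_const_right _ _ <| tendsto_atTop_add_const_right _ _ <|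
    tendsto_natCast_atTop_atTop.atTop_mul_const h_log

lemma tendsto_logRatio_atBot (a r : ℝ) (n : ℕ) : Tendsto (logRatio a r n) atTop atBot := by
  have h_inv : Tendsto (fun y : ℝ ↦ 1 + 1 / (y + a)) atTop (𝓝 (1 + 0)) := by
    simp only [one_div]
    exact (tendsto_inv_atTop_zero.comp (tendsto_atTop_add_const_right _ a tendsto_id)).const_add 1
  have h_log := (h_inv.log (by norm_num)).const_mul (n : ℝ)
  have h_succ : Tendsto (fun y : ℝ ↦ -Real.log (y + 1)) atTop atBot :=
    tendsto_neg_atTop_atBot.comp <|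
      Real.tendsto_log_atTop.comp (tendsto_atTop_add_const_right _ 1 tendsto_id)
  exact tendsto_atBot_add_const_right _ _ (h_log.add_atBot h_succ)

lemma exists_logRatio_eq_zero (ha : 0 < a) {n : ℕ} (hn : 0 ≤ logRatio a r n 0) :
    ∃ κ, 0 ≤ κ ∧ logRatio a r n κ = 0 := by
  obtain ⟨Y, hY, hY0⟩ := ((tendsto_logRatio_atBot a r n).eventually_le_atBot 0).and
    (eventually_ge_atTop 0) |>.exists
  have h_cont : ContinuousOn (logRatio a r n) (Icc 0 Y) := fun y hy ↦
    (hasDerivAt_logRatio ha hy.1).continuousAt.continuousWithinAt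
  obtain ⟨κ, hκ, h_zero⟩ := intermediate_value_Icc' hY0 h_cont ⟨hY, hn⟩
  exact ⟨κ, hκ.1, h_zero⟩

lemma exists_mode_tendsto_atTop (ha : 0 < a) (r : ℝ) :
    ∃ κ : ℕ → ℝ, Tendsto κ atTop atTop ∧ ∀ᶠ n in atTop, logRatio a r n (κ n) = 0 := by
  obtain ⟨κ, hκ⟩ := Eventually.choice <|
    ((tendsto_logRatio_atTop ha r le_rfl).eventually_ge_atTop 0).mono fun n hn ↦
      exists_logRatio_eq_zero ha hn
  refine ⟨κ, tendsto_atTop.2 fun b ↦ ?_, hκ.mono fun n hn ↦ hn.2⟩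
  have hb := tendsto_logRatio_atTop ha r (le_max_right b 0)
  filter_upwards [hκ, hb.eventually_gt_atTop 0] with n ⟨hκ0, h_zero⟩ hn
  refine (le_max_left b 0).trans (le_of_lt ?_)
  by_contra! h
  exact ((antitoneOn_logRatio ha hκ0 (le_max_right b 0) h).trans_eq h_zero).not_gt hn

lemma isEquivalent_log_one_add_div (a : ℝ) :
    (fun y : ℝ ↦ Real.log (1 + 1 / (y + a))) ~[atTop] fun y ↦ y⁻¹ := by
  have h_add : (fun y : ℝ ↦ y + a) ~[atTop] id :=
    IsEquivalent.refl.add_const_of_norm_tendsto_atTop tendsto_abs_atTop_atTop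
  have h_ratio := (isEquivalent_iff_tendsto_one
    ((tendsto_atTop_add_const_right _ a tendsto_id).eventually_ne_atTop 0)).1 h_add.symm
  refine (isEquivalent_iff_tendsto_one ((eventually_ne_atTop 0).mono fun y ↦ inv_ne_zero)).2 ?_
  have h_arg : Tendsto (fun y : ℝ ↦ y * (1 / (y + a))) atTop (𝓝 1) :=
    h_ratio.congr fun y ↦ div_eq_mul_one_div y (y + a)
  exact (Real.tendsto_mul_log_one_add_of_tendsto h_arg).congr fun y ↦ by simp [mul_comm]

lemma isEquivalent_log_add_one (c : ℝ) :
    (fun y : ℝ ↦ Real.log (y + 1) - c) ~[atTop] Real.log := by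
  have h_succ : (fun y : ℝ ↦ y + 1) ~[atTop] id :=
    IsEquivalent.refl.add_const_of_norm_tendsto_atTop tendsto_abs_atTop_atTop
  simpa only [sub_eq_add_neg, id] using (h_succ.log tendsto_id).add_const_of_norm_tendsto_atTop
    (tendsto_abs_atTop_atTop.comp Real.tendsto_log_atTop)

lemma natCast_isEquivalent_mul_log {κ : ℕ → ℝ} (hκ : Tendsto κ atTop atTop)
    (h_mode : ∀ᶠ n in atTop, logRatio a r n (κ n) = 0) :
    (fun n : ℕ ↦ (n : ℝ)) ~[atTop] fun n ↦ κ n * Real.log (κ n) := by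
  have h := ((isEquivalent_log_add_one (Real.log r)).div
    (isEquivalent_log_one_add_div a)).comp_tendsto hκ
  refine (h.congr_left ?_).congr_right ?_
  · filter_upwards [h_mode, hκ.eventually_gt_atTop (-a)] with n hn hκa
    have h_log : 0 < Real.log (1 + 1 / (κ n + a)) :=
      Real.log_pos (lt_add_of_pos_right 1 (one_div_pos.2 (by linarith)))
    simp only [logRatio, Function.comp_apply, Pi.div_apply] at hn ⊢
    rw [div_eq_iff h_log.ne']
    linarith
  · exact .of_forall fun n ↦ by simp [mul_comm]

lemma isEquivalent_div_log_of_mul_log {α : Type*} {l : Filter α} {x y : α → ℝ}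
    (hy : Tendsto y l atTop) (h : x ~[l] fun i ↦ y i * Real.log (y i)) :
    y ~[l] fun i ↦ x i / Real.log (x i) := by
  have hy_log : Tendsto (fun i ↦ Real.log (y i)) l atTop := Real.tendsto_log_atTop.comp hy
  have h_log_log : (fun i ↦ Real.log (Real.log (y i))) =o[l] fun i ↦ Real.log (y i) :=
    Real.isLittleO_log_id_atTop.comp_tendsto hy_log
  have h_log : (fun i ↦ Real.log (x i)) ~[l] fun i ↦ Real.log (y i) :=
    calc (fun i ↦ Real.log (x i))
      _ ~[l] fun i ↦ Real.log (y i * Real.log (y i)) := h.log (hy.atTop_mul_atTop₀ hy_log)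
      _ =ᶠ[l] fun i ↦ Real.log (y i) + Real.log (Real.log (y i)) := by
        filter_upwards [hy.eventually_ne_atTop 0, hy_log.eventually_ne_atTop 0] with i
        exact Real.log_mul
      _ ~[l] fun i ↦ Real.log (y i) := IsEquivalent.refl.add_isLittleO h_log_log
  refine (h.div h_log).symm.congr_left ?_
  filter_upwards [hy_log.eventually_ne_atTop 0] with i hi
  exact mul_div_cancel_right₀ _ hi

end Mode

lemma tendsto_div_log_pow_atTop (k : ℕ) : Tendsto (fun x ↦ x / Real.log x ^ k) atTop atTop := by
  have h_pos : ∀ᶠ x in atTop, Real.log x ^ k / x ∈ Ioi 0 := by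
    filter_upwards [eventually_gt_atTop 1] with x hx
    have := Real.log_pos hx
    exact mem_Ioi.2 (by positivity)
  have h_zero := Real.isLittleO_pow_log_id_atTop (n := k) |>.tendsto_div_nhds_zero
  exact (tendsto_nhdsWithin_iff.2 ⟨h_zero, h_pos⟩).inv_tendsto_nhdsGT_zero.congr fun x ↦
    inv_div _ _

section TiltedVariance

variable {a r : ℝ}

lemma hasScore_poissonWeight (ha : 0 < a) (hr : 0 < r) (n : ℕ) (κ : ℝ) :
    HasScore (fun k ↦ poissonWeight a r n k / poissonMoment a r n)
      (fun y ↦ 1 - Real.exp (logRatio a r n y)) κ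
      (poissonMoment a r (n + 1) / poissonMoment a r n - (κ + a))
      (poissonMoment a r (n + 2) / poissonMoment a r n -
        2 * (κ + a) * (poissonMoment a r (n + 1) / poissonMoment a r n) + (κ + a) ^ 2) := by
  have h_one : HasSum (fun k ↦ poissonWeight a r n k / poissonMoment a r n) 1 := by
    simpa [(poissonMoment_pos ha hr n).ne'] using
      (hasSum_poissonWeight ha hr n).div_const (poissonMoment a r n)
  have h_moment (j : ℕ) : HasSum
      (fun k : ℕ ↦ (k + a) ^ j * (poissonWeight a r n k / poissonMoment a r n))
      (poissonMoment a r (n + j) / poissonMoment a r n) := by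
    convert! (hasSum_poissonWeight ha hr (n + j)).div_const (poissonMoment a r n) using 2 with k
    rw [poissonWeight, poissonWeight, pow_add]
    ring
  refine ⟨fun k ↦ ?_, fun k ↦ ?_, h_one, ?_, ?_, ?_⟩
  · exact div_nonneg (poissonWeight_pos ha hr n k).le (poissonMoment_pos ha hr n).le
  · rw [poissonWeight_succ ha hr]
    ring
  · convert! (h_moment 1).sub (h_one.mul_left (κ + a)) using 2 <;> ring
  · convert! ((h_moment 2).sub ((h_moment 1).mul_left (2 * (κ + a)))).add
      (h_one.mul_left ((κ + a) ^ 2)) using 2 <;> ring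
  · convert! (((h_moment 3).sub ((h_moment 2).mul_left (3 * (κ + a)))).add
      ((h_moment 1).mul_left (3 * (κ + a) ^ 2))).sub (h_one.mul_left ((κ + a) ^ 3)) |>.summable
      using 2
    ring

lemma abs_tiltedVariance_div_sub_one_le (ha : 0 < a) (hr : 0 < r) {n : ℕ} (hn : n ≠ 0) {κ δ : ℝ}
    (hκ : 0 < κ) (hδ : 0 < δ) (hδ' : δ ≤ 1 / 40) (haκ : a + 1 ≤ δ / 8 * κ) (hκn : κ / n ≤ δ / 8)
    (h_mode : logRatio a r n κ = 0) (hv : 1 ≤ κ ^ 2 / n)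
    (hMv : 7 * (3 / δ ^ 2) ≤ 5 * δ * √(κ ^ 2 / n)) :
    |tiltedVariance a r n / (κ ^ 2 / n) - 1| ≤ 240 * δ := by
  have hvκ : κ ^ 2 / n ≤ 5 * δ * κ :=
    calc κ ^ 2 / n = κ / n * κ := by ring
      _ ≤ δ / 8 * κ := by gcongr
      _ ≤ 5 * δ * κ := by gcongr; linarith
  have h := (hasScore_poissonWeight ha hr n κ).abs_variance_div_sub_one_le
    (isNearlyLinear_one_sub_exp_logRatio ha hn hκ hδ (by linarith) haκ hκn h_mode)
    (by positivity) (by linarith) (by positivity) hv hvκ hMv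
  convert! h using 1
  · rw [tiltedVariance, ← div_pow]
    congr 3
    ring
  · ring

lemma tiltedVariance_isEquivalent_sq_div (ha : 0 < a) (hr : 0 < r) {κ : ℕ → ℝ}
    (hκ : Tendsto κ atTop atTop) (h_mode : ∀ᶠ n in atTop, logRatio a r n (κ n) = 0)
    (hκn : Tendsto (fun n ↦ κ n / n) atTop (𝓝 0)) (hv : Tendsto (fun n ↦ κ n ^ 2 / n) atTop atTop) :
    tiltedVariance a r ~[atTop] fun n ↦ κ n ^ 2 / n := by
  refine (isEquivalent_iff_tendsto_one (hv.eventually_ne_atTop 0)).2 ?_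
  refine Metric.tendsto_nhds.2 fun ε hε ↦ ?_
  obtain ⟨δ, hδ, hδ', hδε⟩ : ∃ δ : ℝ, 0 < δ ∧ δ ≤ 1 / 40 ∧ 240 * δ < ε :=
    ⟨min (1 / 40) (ε / 480), by positivity, min_le_left _ _,
      by linarith [min_le_right (1 / 40) (ε / 480)]⟩
  have h_sqrt := (Real.tendsto_sqrt_atTop.comp hv).const_mul_atTop (by positivity : 0 < 5 * δ)
  filter_upwards [eventually_ne_atTop 0, h_mode, hκ.eventually_gt_atTop 0,
    (hκ.const_mul_atTop (by positivity : 0 < δ / 8)).eventually_ge_atTop (a + 1),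
    hκn.eventually_le_const (by positivity : 0 < δ / 8), hv.eventually_ge_atTop 1,
    h_sqrt.eventually_ge_atTop (7 * (3 / δ ^ 2))] with n hn h_mode hκ haκ hκn hv hMv
  exact (abs_tiltedVariance_div_sub_one_le ha hr hn hκ hδ hδ' haκ hκn h_mode hv hMv).trans_lt hδε

lemma tiltedVariance_isEquivalent (ha : 0 < a) (hr : 0 < r) :
    tiltedVariance a r ~[atTop] fun n ↦ n / Real.log n ^ 2 := by
  obtain ⟨κ, hκ, h_mode⟩ := exists_mode_tendsto_atTop ha r
  have h_log : Tendsto (fun n : ℕ ↦ Real.log n) atTop atTop :=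
    Real.tendsto_log_atTop.comp tendsto_natCast_atTop_atTop
  have hκ_equiv : κ ~[atTop] fun n ↦ n / Real.log n :=
    isEquivalent_div_log_of_mul_log hκ (natCast_isEquivalent_mul_log hκ h_mode)
  have hκn : (fun n ↦ κ n / n) ~[atTop] fun n ↦ (Real.log n)⁻¹ := by
    refine (hκ_equiv.div .refl).congr_right ?_
    filter_upwards [eventually_ne_atTop 0] with n hn
    simp only [Pi.div_apply]
    field_simp
  have hv : (fun n ↦ κ n ^ 2 / n) ~[atTop] fun n ↦ n / Real.log n ^ 2 := by
    refine ((hκ_equiv.pow 2).div .refl).congr_right ?_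
    filter_upwards [eventually_ne_atTop 0] with n hn
    simp only [Pi.div_apply, Pi.pow_apply]
    field_simp
  exact (tiltedVariance_isEquivalent_sq_div ha hr hκ h_mode
    (hκn.symm.tendsto_nhds h_log.inv_tendsto_atTop)
    (hv.symm.tendsto_atTop <|
      (tendsto_div_log_pow_atTop 2).comp tendsto_natCast_atTop_atTop)).trans hv

end TiltedVariance

/-- `T_{n+2}/T_n − T_{n+1}²/T_n² = (m²·n/log² n)·(1 + o(1))` as `n → ∞`. -/
theorem stmt_17 (m c : ℕ) (hm : 0 < m) (hc : 0 < c) :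
    Tendsto
      (fun n : ℕ =>
        ((Ttot m c (n + 2) : ℝ) / Ttot m c n -
            (Ttot m c (n + 1) : ℝ) ^ 2 / (Ttot m c n : ℝ) ^ 2) /
          ((m : ℝ) ^ 2 * n / (Real.log n) ^ 2))
      atTop (nhds 1) := by
  have h_ne : ∀ᶠ n : ℕ in atTop, (m : ℝ) ^ 2 * n / Real.log n ^ 2 ≠ 0 := by
    simp only [mul_div_assoc]
    exact ((tendsto_div_log_pow_atTop 2).const_mul_atTop (by positivity)).comp
      tendsto_natCast_atTop_atTop |>.eventually_ne_atTop 0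
  refine (isEquivalent_iff_tendsto_one h_ne).1 ?_
  simp only [Ttot_variance_eq hm.ne', mul_div_assoc]
  exact IsEquivalent.refl.mul (tiltedVariance_isEquivalent (by positivity) (by positivity))
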